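/- arXiv:1907.00440 — 3 statements merged into one kernel-verified Lean document; each statement's English description precedes it below -/
import Mathlib

section
/- Equilibrium orthogonality (smooth setting, equation (2.4) of the paper): Let d ≥ 1, let f : ℝ^d → ℝ, let u : ℝ^d → ℝ be a C² compactly supported function with Δu(x) = −f(x) for all x ∈ ℝ^d, and let σ* : ℝ^d → ℝ^d be a C¹ compactly supported vector field satisfying the equilibrium condition div σ*(x) = −f(x) for all x ∈ ℝ^d. Then ∫_{ℝ^d} ⟨∇u(x), ∇u(x) − σ*(x)⟩ dx = 0; i.e. ∇u is orthogonal in L² to ∇u − σ*, so ∇u lies on the hypersphere having σ* as a diameter. -/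
open MeasureTheory RealInnerProductSpace

/-- Divergence of a vector field on `ℝ^d`: `div σ (x) = ∑ i (∂σᵢ/∂xᵢ)(x)`. -/
noncomputable def vdiv {d : ℕ} (σ : EuclideanSpace ℝ (Fin d) → EuclideanSpace ℝ (Fin d))
    (x : EuclideanSpace ℝ (Fin d)) : ℝ :=
  ∑ i : Fin d, fderiv ℝ σ x (EuclideanSpace.single i (1 : ℝ)) i

/-- Integration by parts against a `C¹` vector field. -/
lemma ibp_aux {d : ℕ} (u : EuclideanSpace ℝ (Fin d) → ℝ)
    (hu : ContDiff ℝ 2 u) (hs : HasCompactSupport u)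
    (τ : EuclideanSpace ℝ (Fin d) → EuclideanSpace ℝ (Fin d))
    (hτ : ContDiff ℝ 1 τ) (h0 : ∀ x, vdiv τ x = 0) :
    ∫ x, ⟪gradient u x, τ x⟫ = 0 := by
  have hτi : ∀ i : Fin d, ContDiff ℝ 1 (fun x => τ x i) := fun i => by
    exact (EuclideanSpace.proj (𝕜 := ℝ) i).contDiff.comp hτ
  have hfd : ∀ (i : Fin d) x v, fderiv ℝ (fun x => τ x i) x v = fderiv ℝ τ x v i := by
    intro i x v
    have h := ((EuclideanSpace.proj (𝕜 := ℝ) i : EuclideanSpace ℝ (Fin d) →L[ℝ] ℝ).hasFDerivAt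
      (x := τ x)).comp x (hτ.differentiable one_ne_zero x).hasFDerivAt
    have h2 : fderiv ℝ (fun x => τ x i) x = _ := h.fderiv
    rw [h2]; rfl
  have hdu : ∀ v, Continuous (fun x => fderiv ℝ u x v) := fun v =>
    (hu.continuous_fderiv two_ne_zero).clm_apply continuous_const
  have hdsupp : ∀ v, HasCompactSupport (fun x => fderiv ℝ u x v) := fun v =>
    hs.fderiv_apply ℝ v
  have hdτ : ∀ (i : Fin d) v, Continuous (fun x => fderiv ℝ (fun x => τ x i) x v) := fun i v =>
    ((hτi i).continuous_fderiv one_ne_zero).clm_apply continuous_const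
  have I1 : ∀ (i : Fin d) v, Integrable (fun x => fderiv ℝ u x v * τ x i) := fun i v =>
    ((hdu v).mul (hτi i).continuous).integrable_of_hasCompactSupport ((hdsupp v).mul_right)
  have I2 : ∀ (i : Fin d) v, Integrable (fun x => u x * fderiv ℝ (fun x => τ x i) x v) :=
    fun i v => (hu.continuous.mul (hdτ i v)).integrable_of_hasCompactSupport hs.mul_right
  have key : ∀ i : Fin d, ∫ x, fderiv ℝ u x (EuclideanSpace.single i (1 : ℝ)) * τ x i
      = - ∫ x, u x * fderiv ℝ (fun x => τ x i) x (EuclideanSpace.single i (1 : ℝ)) := by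
    intro i
    rw [integral_mul_fderiv_eq_neg_fderiv_mul_of_integrable (I1 i _) (I2 i _)
      ((hu.continuous.mul (hτi i).continuous).integrable_of_hasCompactSupport hs.mul_right)
      (fun x _ => hu.differentiable two_ne_zero x)
      (fun x _ => (hτi i).differentiable one_ne_zero x), neg_neg]
  have hpt : ∀ x, ⟪gradient u x, τ x⟫
      = ∑ i, fderiv ℝ u x (EuclideanSpace.single i (1 : ℝ)) * τ x i := by
    intro x
    rw [gradient, InnerProductSpace.toDual_symm_apply]
    conv_lhs => rw [← (EuclideanSpace.basisFun (Fin d) ℝ).sum_repr (τ x)]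
    simp [mul_comm]
  simp_rw [hpt]
  rw [integral_finsetSum _ (fun i _ => I1 i _)]
  simp_rw [key]
  rw [Finset.sum_neg_distrib, ← integral_finsetSum _ (fun i _ => I2 i _)]
  simp_rw [← Finset.mul_sum, hfd]
  have : ∀ x, ∑ i, fderiv ℝ τ x (EuclideanSpace.single i (1 : ℝ)) i = 0 := h0
  simp [this]

/-- Equilibrium orthogonality: if `Δu = -f` and `div σ* = -f`, then
`∫ ⟪∇u, ∇u - σ*⟫ = 0`. -/
theorem equilibrium_orthogonality {d : ℕ} (hd : 1 ≤ d)
    (f u : EuclideanSpace ℝ (Fin d) → ℝ)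
    (hu : ContDiff ℝ 2 u) (husupp : HasCompactSupport u)
    (hlap : ∀ x, vdiv (gradient u) x = - f x)
    (σstar : EuclideanSpace ℝ (Fin d) → EuclideanSpace ℝ (Fin d))
    (hσ : ContDiff ℝ 1 σstar) (hσsupp : HasCompactSupport σstar)
    (hdiv : ∀ x, vdiv σstar x = - f x) :
    ∫ x, ⟪gradient u x, gradient u x - σstar x⟫ = 0 := by
  have hg : ContDiff ℝ 1 (gradient u) :=
    (InnerProductSpace.toDual ℝ (EuclideanSpace ℝ (Fin d))).symm.contDiff.comp
      (hu.fderiv_right (m := 1) (by norm_num))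
  refine ibp_aux u hu husupp (fun x => gradient u x - σstar x) (hg.sub hσ) fun x => ?_
  have h1 := hlap x
  have h2 := hdiv x
  unfold vdiv at *
  rw [fderiv_fun_sub (hg.differentiable one_ne_zero x) (hσ.differentiable one_ne_zero x)]
  simp [Finset.sum_sub_distrib, h1, h2]
end

section
/- Prager–Synge theorem (smooth setting, Theorem 2.2 of the paper): Let d ≥ 1, let f : ℝ^d → ℝ, let u : ℝ^d → ℝ be a C² compactly supported function with Δu(x) = −f(x) for all x ∈ ℝ^d, let v : ℝ^d → ℝ be any C¹ compactly supported function, and let σ* : ℝ^d → ℝ^d be any C¹ compactly supported vector field satisfying the equilibrium condition div σ*(x) = −f(x) for all x ∈ ℝ^d. Then ∫_{ℝ^d} ‖∇u(x) − ∇v(x)‖² dx + ∫_{ℝ^d} ‖∇u(x) − σ*(x)‖² dx = ∫_{ℝ^d} ‖∇v(x) − σ*(x)‖² dx. -/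
open MeasureTheory RealInnerProductSpace

lemma ps_contDiff_gradient {d : ℕ} {n : ℕ} {u : EuclideanSpace ℝ (Fin d) → ℝ}
    (hu : ContDiff ℝ (n + 1) u) : ContDiff ℝ n (gradient u) := by
  have h : ContDiff ℝ n (fderiv ℝ u) := hu.fderiv_right le_rfl
  exact (InnerProductSpace.toDual ℝ
    (EuclideanSpace ℝ (Fin d))).symm.toContinuousLinearEquiv.contDiff.comp h

lemma ps_supp_gradient {d : ℕ} {u : EuclideanSpace ℝ (Fin d) → ℝ}
    (hu : HasCompactSupport u) : HasCompactSupport (gradient u) := by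
  have h : HasCompactSupport (fderiv ℝ u) := hu.fderiv ℝ
  exact h.comp_left (g := (InnerProductSpace.toDual ℝ (EuclideanSpace ℝ (Fin d))).symm) (map_zero _)

lemma ps_gradient_apply {d : ℕ} (w : EuclideanSpace ℝ (Fin d) → ℝ)
    (x : EuclideanSpace ℝ (Fin d)) (i : Fin d) :
    gradient w x i = fderiv ℝ w x (EuclideanSpace.single i (1 : ℝ)) := by
  have h : ⟪gradient w x, EuclideanSpace.single i (1 : ℝ)⟫
      = fderiv ℝ w x (EuclideanSpace.single i (1 : ℝ)) := by
    rw [gradient, InnerProductSpace.toDual_symm_apply]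
  rw [← h, EuclideanSpace.inner_single_right]
  simp

lemma ps_fderiv_apply {d : ℕ} {τ : EuclideanSpace ℝ (Fin d) → EuclideanSpace ℝ (Fin d)}
    {x : EuclideanSpace ℝ (Fin d)} (h : DifferentiableAt ℝ τ x) (i : Fin d)
    (y : EuclideanSpace ℝ (Fin d)) :
    fderiv ℝ (fun x => τ x i) x y = fderiv ℝ τ x y i := by
  have := ((EuclideanSpace.proj (𝕜 := ℝ) i).hasFDerivAt.comp x h.hasFDerivAt).fderiv
  exact congrArg (fun L => L y) this

lemma ps_orth {d : ℕ} {w : EuclideanSpace ℝ (Fin d) → ℝ}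
    {τ : EuclideanSpace ℝ (Fin d) → EuclideanSpace ℝ (Fin d)}
    (hw : ContDiff ℝ 1 w) (hws : HasCompactSupport w) (hτ : ContDiff ℝ 1 τ)
    (hdiv : ∀ x, vdiv τ x = 0) : ∫ x, ⟪gradient w x, τ x⟫ = 0 := by
  have hτi : ∀ i, ContDiff ℝ 1 (fun x => τ x i) := fun i =>
    (EuclideanSpace.proj (𝕜 := ℝ) i).contDiff.comp hτ
  have hwd : ∀ y, Continuous (fun x => fderiv ℝ w x y) := fun y =>
    (hw.continuous_fderiv one_ne_zero).clm_apply continuous_const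
  have hτd : ∀ i y, Continuous (fun x => fderiv ℝ (fun x => τ x i) x y) := fun i y =>
    ((hτi i).continuous_fderiv one_ne_zero).clm_apply continuous_const
  have I1 : ∀ i y, Integrable (fun x => fderiv ℝ w x y * τ x i) := fun i y =>
    ((hwd y).mul (hτi i).continuous).integrable_of_hasCompactSupport
      ((hws.fderiv_apply ℝ y).mul_right)
  have I2 : ∀ i y, Integrable (fun x => w x * fderiv ℝ (fun x => τ x i) x y) := fun i y =>
    (hw.continuous.mul (hτd i y)).integrable_of_hasCompactSupport hws.mul_right
  have I3 : ∀ i, Integrable (fun x => w x * τ x i) := fun i =>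
    (hw.continuous.mul (hτi i).continuous).integrable_of_hasCompactSupport hws.mul_right
  have key : ∀ i, ∫ x, w x * fderiv ℝ (fun x => τ x i) x (EuclideanSpace.single i (1 : ℝ))
      = - ∫ x, fderiv ℝ w x (EuclideanSpace.single i (1 : ℝ)) * τ x i := fun i =>
    integral_mul_fderiv_eq_neg_fderiv_mul_of_integrable (I1 i _) (I2 i _) (I3 i)
      (fun x _ => hw.differentiable one_ne_zero x)
      (fun x _ => (hτi i).differentiable one_ne_zero x)
  have e1 : ∀ x, ⟪gradient w x, τ x⟫
      = ∑ i, fderiv ℝ w x (EuclideanSpace.single i (1 : ℝ)) * τ x i := by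
    intro x
    rw [PiLp.inner_apply]
    refine Finset.sum_congr rfl fun i _ => ?_
    rw [ps_gradient_apply]
    simp [mul_comm]
  simp_rw [e1]
  rw [integral_finsetSum _ (fun i _ => I1 i _)]
  have e2 : ∑ i, ∫ x, w x * fderiv ℝ (fun x => τ x i) x (EuclideanSpace.single i (1 : ℝ)) = 0 := by
    rw [← integral_finsetSum _ (fun i _ => I2 i _)]
    have : ∀ x, ∑ i, w x * fderiv ℝ (fun x => τ x i) x (EuclideanSpace.single i (1 : ℝ)) = 0 := by
      intro x
      simp_rw [ps_fderiv_apply (hτ.differentiable one_ne_zero x)]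
      rw [← Finset.mul_sum]
      have := hdiv x
      rw [vdiv] at this
      rw [this, mul_zero]
    simp [this]
  simp_rw [key] at e2
  rw [Finset.sum_neg_distrib] at e2
  linarith

lemma ps_int_sq {d : ℕ} (a : EuclideanSpace ℝ (Fin d) → EuclideanSpace ℝ (Fin d))
    (ha : Continuous a) (sa : HasCompactSupport a) : Integrable (fun x => ‖a x‖ ^ 2) := by
  have h : HasCompactSupport (fun x => ‖a x‖ ^ 2) := by
    refine sa.mono ?_
    intro x hx h0
    exact hx (by simp [h0])
  exact (ha.norm.pow 2).integrable_of_hasCompactSupport h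

lemma ps_int_inner {d : ℕ} (a b : EuclideanSpace ℝ (Fin d) → EuclideanSpace ℝ (Fin d))
    (ha : Continuous a) (hb : Continuous b) (sa : HasCompactSupport a) :
    Integrable (fun x => ⟪a x, b x⟫) := by
  have h : HasCompactSupport (fun x => ⟪a x, b x⟫) := by
    refine sa.mono ?_
    intro x hx h0
    exact hx (by simp [h0])
  exact (ha.inner hb).integrable_of_hasCompactSupport h

lemma ps_pyth {d : ℕ} (a b c : EuclideanSpace ℝ (Fin d) → EuclideanSpace ℝ (Fin d))
    (ha : Continuous a) (hb : Continuous b) (hc : Continuous c)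
    (sa : HasCompactSupport a) (sb : HasCompactSupport b) (sc : HasCompactSupport c)
    (orth : ∫ x, ⟪a x - b x, a x - c x⟫ = 0) :
    (∫ x, ‖a x - b x‖ ^ 2) + (∫ x, ‖a x - c x‖ ^ 2) = ∫ x, ‖b x - c x‖ ^ 2 := by
  have cA : Continuous (fun x => a x - b x) := ha.sub hb
  have cB : Continuous (fun x => a x - c x) := ha.sub hc
  have sA : HasCompactSupport (fun x => a x - b x) := sa.sub sb
  have sB : HasCompactSupport (fun x => a x - c x) := sa.sub sc
  have iA : Integrable (fun x => ‖a x - b x‖ ^ 2) :=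
    ps_int_sq _ cA sA
  have iB : Integrable (fun x => ‖a x - c x‖ ^ 2) :=
    ps_int_sq _ cB sB
  have iC : Integrable (fun x => ⟪a x - b x, a x - c x⟫) :=
    ps_int_inner _ _ cA cB sA
  have e : ∀ x, ‖b x - c x‖ ^ 2 = ‖a x - b x‖ ^ 2
      + ‖a x - c x‖ ^ 2
      - 2 * ⟪a x - b x, a x - c x⟫ := by
    intro x
    have h := norm_sub_sq_real (a x - b x) (a x - c x)
    rw [sub_sub_sub_cancel_left, norm_sub_rev] at h
    rw [h]
    ring
  simp_rw [e]
  have iAB : Integrable (fun x => ‖a x - b x‖ ^ 2 + ‖a x - c x‖ ^ 2) := iA.add iB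
  rw [integral_sub iAB (iC.const_mul 2), integral_add iA iB, integral_const_mul, orth]
  ring

/-- Prager–Synge theorem (smooth setting):
`‖∇u - ∇v‖² + ‖∇u - σ*‖² = ‖∇v - σ*‖²` in L². -/
theorem prager_synge {d : ℕ} (hd : 1 ≤ d)
    (f u : EuclideanSpace ℝ (Fin d) → ℝ)
    (hu : ContDiff ℝ 2 u) (husupp : HasCompactSupport u)
    (hlap : ∀ x, vdiv (gradient u) x = - f x)
    (v : EuclideanSpace ℝ (Fin d) → ℝ)
    (hv : ContDiff ℝ 1 v) (hvsupp : HasCompactSupport v)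
    (σstar : EuclideanSpace ℝ (Fin d) → EuclideanSpace ℝ (Fin d))
    (hσ : ContDiff ℝ 1 σstar) (hσsupp : HasCompactSupport σstar)
    (hdiv : ∀ x, vdiv σstar x = - f x) :
    (∫ x, ‖gradient u x - gradient v x‖ ^ 2) + (∫ x, ‖gradient u x - σstar x‖ ^ 2)
      = ∫ x, ‖gradient v x - σstar x‖ ^ 2 := by
  have hu1 : ContDiff ℝ 1 u := hu.of_le (by norm_num)
  have hgu : ContDiff ℝ 1 (gradient u) := by
    have := ps_contDiff_gradient (n := 1) (u := u) (by norm_num; exact hu)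
    exact_mod_cast this
  have hgv : Continuous (gradient v) :=
    (ps_contDiff_gradient (n := 0) (u := v) (by simpa using hv)).continuous
  have sgu := ps_supp_gradient husupp
  have sgv := ps_supp_gradient hvsupp
  have hτdiv : ∀ x, vdiv (fun x => gradient u x - σstar x) x = 0 := by
    intro x
    have h1 := hlap x
    have h2 := hdiv x
    unfold vdiv at *
    rw [fderiv_fun_sub (hgu.differentiable one_ne_zero x) (hσ.differentiable one_ne_zero x)]
    simp only [_root_.sub_apply, PiLp.sub_apply, Finset.sum_sub_distrib]
    rw [h1, h2, sub_self]
  have orth := ps_orth (w := u - v) (τ := fun x => gradient u x - σstar x)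
    (hu1.sub hv) (husupp.sub hvsupp) (hgu.sub hσ) hτdiv
  have hg : ∀ x, gradient (u - v) x = gradient u x - gradient v x := by
    intro x
    unfold gradient
    rw [fderiv_sub (hu1.differentiable one_ne_zero x) (hv.differentiable one_ne_zero x), map_sub]
  have orth' : ∫ x, ⟪gradient u x - gradient v x, gradient u x - σstar x⟫ = 0 := by
    rw [← orth]
    refine integral_congr_ae (Filter.Eventually.of_forall fun x => ?_)
    simp only [hg]
  exact ps_pyth _ _ _ hgu.continuous hgv hσ.continuous sgu sgv hσsupp orth'
end

section
/- Hypercircle diameter property: Let E be a real inner product space, let σ, σ*, σ'' ∈ E with σ'' ≠ 0, suppose ⟪σ, σ − σ*⟫ = 0 and ⟪σ − σ*, σ''⟫ = 0, and define σ̂'' := (⟪σ, σ''⟫ / ‖σ''‖²) • σ''. Then ⟪σ − σ̂'', σ − σ*⟫ = 0, and consequently ‖σ − (1/2) • (σ* + σ̂'')‖ = (1/2)‖σ* − σ̂''‖; i.e. σ lies on the hypercircle for which the segment connecting σ* to σ̂'' is a diameter. -/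
open RealInnerProductSpace

/-- Hypercircle diameter property: `⟪σ - σ̂'', σ - σ*⟫ = 0`, hence `σ` lies on the
hypercircle for which the segment connecting `σ*` to `σ̂''` is a diameter. -/
theorem hypercircle_diameter {E : Type*} [NormedAddCommGroup E] [InnerProductSpace ℝ E]
    (σ σstar σ'' : E) (hσ'' : σ'' ≠ 0)
    (h1 : ⟪σ, σ - σstar⟫ = 0) (h2 : ⟪σ - σstar, σ''⟫ = 0)
    (σhat : E) (hσhat : σhat = (⟪σ, σ''⟫ / ‖σ''‖ ^ 2) • σ'') :
    ⟪σ - σhat, σ - σstar⟫ = 0 ∧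
      ‖σ - (1 / 2 : ℝ) • (σstar + σhat)‖ = (1 / 2) * ‖σstar - σhat‖ := by
  have key : ⟪σ - σhat, σ - σstar⟫ = 0 := by
    rw [inner_sub_left, h1, hσhat, real_inner_smul_left, real_inner_comm (σ - σstar) σ'', h2]
    simp
  refine ⟨key, ?_⟩
  have e1 : σ - (1 / 2 : ℝ) • (σstar + σhat)
      = (1 / 2 : ℝ) • ((σ - σhat) + (σ - σstar)) := by
    module
  have e2 : σstar - σhat = (σ - σhat) - (σ - σstar) := by abel
  have e3 : ‖(σ - σhat) - (σ - σstar)‖ = ‖(σ - σhat) + (σ - σstar)‖ :=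
    norm_sub_eq_norm_add (by rw [real_inner_comm]; exact key)
  rw [e1, e2, e3, norm_smul]
  norm_num
end
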